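/- arXiv:math/0702586 — 4 statements merged into one kernel-verified Lean document; each statement's English description precedes it below -/
import Mathlib

section
/- The polyhedron 𝔓 is always contained in the convex hull of the finite set {μ_j ∣ j ∈ J}, without any convexity assumption on ψ. (First step of the proof of Lemma 5.4.) -/
/-!
Were a point `l` of the polyhedron outside the convex hull, then, with `p` the point of the hull
nearest to `l`, the direction `χ = l - p` would strictly separate `l` from every `μ j`. But `χ`
lies in some cone `σ j`, so that `⟪χ, l⟫ ≤ ψ χ = ⟪χ, μ j⟫`.
-/

open scoped RealInnerProductSpace

section

variable {E : Type*} [NormedAddCommGroup E] [InnerProductSpace ℝ E]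

theorem exists_forall_inner_le_lt_of_notMem {K : Set E} (hcomplete : IsComplete K)
    (hconvex : Convex ℝ K) {l : E} (hl : l ∉ K) :
    ∃ (χ : E) (u : ℝ), (∀ x ∈ K, ⟪χ, x⟫ ≤ u) ∧ u < ⟪χ, l⟫ := by
  rcases K.eq_empty_or_nonempty with rfl | hne
  · exact ⟨0, -1, by simp, by simp⟩
  obtain ⟨p, hp, hnearest⟩ := exists_norm_eq_iInf_of_complete_convex hne hcomplete hconvex l
  have hobtuse : ∀ x ∈ K, ⟪l - p, x - p⟫ ≤ 0 :=
    (norm_eq_iInf_iff_real_inner_le_zero hconvex hp).mp hnearest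
  have hpos : 0 < ⟪l - p, l - p⟫ :=
    real_inner_self_pos.mpr (sub_ne_zero.mpr (ne_of_mem_of_not_mem hp hl).symm)
  refine ⟨l - p, ⟪l - p, p⟫, fun x hx ↦ ?_, ?_⟩
  · simpa only [inner_sub_right (l - p) x p, sub_nonpos] using hobtuse x hx
  · simpa only [inner_sub_right (l - p) l p, sub_pos] using hpos

theorem polyhedron_subset_convexHull_general {J : Type*} (μ : J → E) (ψ : E → ℝ)
    (hcomplete : IsComplete (convexHull ℝ (Set.range μ)))
    (hψ : ∀ χ, ∃ j, ψ χ ≤ ⟪χ, μ j⟫) :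
    {l : E | ∀ χ : E, ⟪χ, l⟫ ≤ ψ χ} ⊆ convexHull ℝ (Set.range μ) := by
  intro l hl
  by_contra hnotMem
  obtain ⟨χ, u, hle, hlt⟩ :=
    exists_forall_inner_le_lt_of_notMem hcomplete (convex_convexHull ℝ _) hnotMem
  obtain ⟨j, hj⟩ := hψ χ
  have hμ : ⟪χ, μ j⟫ ≤ u := hle (μ j) (subset_convexHull ℝ _ (Set.mem_range_self j))
  exact hlt.not_ge ((hl χ).trans (hj.trans hμ))

end

/-- **First step of the proof of Lemma 5.4.** With notation as in the lemma,
the polyhedron `𝔓 = {l | ∀ χ, ⟪χ, l⟫ ≤ ψ χ}` is always contained in the convex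
hull of the finite set of points `{μ j}`, without any convexity assumption on `ψ`. -/
theorem polyhedron_subset_convexHull
    {E : Type} [NormedAddCommGroup E] [InnerProductSpace ℝ E] [FiniteDimensional ℝ E]
    {J : Type} [Fintype J] [Nonempty J]
    (σ : J → Set E) (μ : J → E) (ψ : E → ℝ)
    (hclosed : ∀ j, IsClosed (σ j))
    (hconvex : ∀ j, Convex ℝ (σ j))
    (hcone : ∀ j, ∀ c : ℝ, 0 ≤ c → ∀ x ∈ σ j, c • x ∈ σ j)
    (hint : ∀ j, (interior (σ j)).Nonempty)
    (hcover : (⋃ j, σ j) = Set.univ)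
    (hψ : ∀ j, ∀ χ ∈ σ j, ψ χ = ⟪χ, μ j⟫) :
    {l : E | ∀ χ : E, ⟪χ, l⟫ ≤ ψ χ} ⊆ convexHull ℝ (Set.range μ) := by
  refine polyhedron_subset_convexHull_general μ ψ
    ((Set.finite_range μ).isCompact_convexHull ℝ).isComplete fun χ ↦ ?_
  exact (Set.iUnion_eq_univ_iff.mp hcover χ).imp fun j hj ↦ (hψ j χ hj).le
end

section
/- Let C be a chain complex of ℤ_ℓ-modules concentrated in finitely many degrees. Assume (i) for every q the homology H_q(C) is a finitely generated ℤ_ℓ-module, and (ii) the ℓ-torsion of C is bounded, i.e. for every q there is an integer N such that C_q[ℓⁿ] = C_q[ℓᴺ] for all n ≥ N. Then for every q the natural map H_q(C) → lim_n H_q(C/ℓⁿC) is an isomorphism, where C/ℓⁿC denotes the quotient complex with terms C_q/ℓⁿC_q. (Isomorphism (4.3) in the proof of Proposition 4.1.) -/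
noncomputable section

namespace LadicHomologyLimit

variable (p : ℕ) [Fact p.Prime]

/-- Transport of a `ℤ`-indexed family of modules along an equality of indices. -/
def casteq (D : ℤ → Type) [∀ q, AddCommGroup (D q)] [∀ q, Module ℤ_[p] (D q)]
    {a b : ℤ} (h : a = b) : D a ≃ₗ[ℤ_[p]] D b := by
  subst h; exact LinearEquiv.refl _ _

lemma casteq_natural {D E : ℤ → Type}
    [∀ q, AddCommGroup (D q)] [∀ q, Module ℤ_[p] (D q)]
    [∀ q, AddCommGroup (E q)] [∀ q, Module ℤ_[p] (E q)]
    (φ : ∀ a : ℤ, D a →ₗ[ℤ_[p]] E a) {a b : ℤ} (h : a = b) (x : D a) :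
    casteq p E h (φ a x) = φ b (casteq p D h x) := by
  subst h; rfl

section Homology

variable (D : ℤ → Type) [∀ q, AddCommGroup (D q)] [∀ q, Module ℤ_[p] (D q)]
variable (dD : ∀ q : ℤ, D q →ₗ[ℤ_[p]] D (q - 1))

/-- Cycles in degree `q` of a chain complex `(D, dD)`. -/
abbrev cycles (q : ℤ) : Submodule ℤ_[p] (D q) := LinearMap.ker (dD q)

/-- Boundaries in degree `q` of a chain complex `(D, dD)`. -/
abbrev bdry (q : ℤ) : Submodule ℤ_[p] (D q) :=
  Submodule.map (casteq p D (show q + 1 - 1 = q by ring)).toLinearMap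
    (LinearMap.range (dD (q + 1)))

/-- Homology in degree `q` of a chain complex `(D, dD)`:
cycles modulo boundaries. -/
abbrev Hgy (q : ℤ) :=
  ↥(cycles p D dD q) ⧸ (bdry p D dD q).comap (cycles p D dD q).subtype

end Homology

variable (C : ℤ → Type) [∀ q, AddCommGroup (C q)] [∀ q, Module ℤ_[p] (C q)]
variable (d : ∀ q : ℤ, C q →ₗ[ℤ_[p]] C (q - 1))

/-- The submodule `ℓⁿ · C q` of `C q` (here `ℓ = p`). -/
abbrev lpow (n : ℕ) (q : ℤ) : Submodule ℤ_[p] (C q) :=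
  LinearMap.range ((p : ℤ_[p]) ^ n • (LinearMap.id : C q →ₗ[ℤ_[p]] C q))

/-- The term in degree `q` of the quotient complex `C/ℓⁿC`. -/
abbrev Cn (n : ℕ) (q : ℤ) := C q ⧸ lpow p C n q

/-- The differential of the quotient complex `C/ℓⁿC`. -/
def dn (n : ℕ) (q : ℤ) : Cn p C n q →ₗ[ℤ_[p]] Cn p C n (q - 1) :=
  Submodule.mapQ (lpow p C n q) (lpow p C n (q - 1)) (d q) (by
    rintro x ⟨y, rfl⟩
    exact ⟨d q y, by simp⟩)

/-- The transition map `C/ℓⁿ⁺¹C → C/ℓⁿC` of the inverse system, in degree `q`. -/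
def trC (n : ℕ) (q : ℤ) : Cn p C (n + 1) q →ₗ[ℤ_[p]] Cn p C n q :=
  Submodule.mapQ (lpow p C (n + 1) q) (lpow p C n q) LinearMap.id (by
    rintro x ⟨y, rfl⟩
    exact ⟨(p : ℤ_[p]) • y, by
      simp [LinearMap.smul_apply, ← mul_smul, pow_succ, mul_comm]⟩)

lemma dn_trC (n : ℕ) (q : ℤ) (x : Cn p C (n + 1) q) :
    dn p C d n q (trC p C n q x) = trC p C n (q - 1) (dn p C d (n + 1) q x) := by
  obtain ⟨y, rfl⟩ := Submodule.Quotient.mk_surjective _ x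
  simp [dn, trC, Submodule.mapQ_apply]

/-- The transition map on cycles. -/
def trZ (n : ℕ) (q : ℤ) :
    ↥(cycles p (Cn p C (n + 1)) (dn p C d (n + 1)) q) →ₗ[ℤ_[p]]
      ↥(cycles p (Cn p C n) (dn p C d n) q) :=
  (trC p C n q).restrict (fun x hx => by
    have h0 : dn p C d n q (trC p C n q x) = 0 := by
      rw [dn_trC, LinearMap.mem_ker.mp hx, map_zero]
    exact LinearMap.mem_ker.mpr h0)

/-- The transition map `H_q(C/ℓⁿ⁺¹C) → H_q(C/ℓⁿC)` on homology. -/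
def trH (n : ℕ) (q : ℤ) :
    Hgy p (Cn p C (n + 1)) (dn p C d (n + 1)) q →ₗ[ℤ_[p]]
      Hgy p (Cn p C n) (dn p C d n) q :=
  Submodule.mapQ _ _ (trZ p C d n q) (by
    intro z hz
    simp only [Submodule.mem_comap, Submodule.coe_subtype, Submodule.mem_map,
      LinearMap.mem_range, LinearEquiv.coe_coe] at hz ⊢
    obtain ⟨w, ⟨y, hy⟩, hw⟩ := hz
    refine ⟨trC p C n (q + 1 - 1) w, ⟨trC p C n (q + 1) y, ?_⟩, ?_⟩
    · rw [dn_trC, hy]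
    · rw [casteq_natural p (fun a => trC p C n a), hw]
      rfl)

/-- The reduction map `C → C/ℓⁿC` in degree `q`. -/
def ρC (n : ℕ) (q : ℤ) : C q →ₗ[ℤ_[p]] Cn p C n q := (lpow p C n q).mkQ

lemma dn_ρC (n : ℕ) (q : ℤ) (x : C q) :
    dn p C d n q (ρC p C n q x) = ρC p C n (q - 1) (d q x) := by
  simp [dn, ρC, Submodule.mapQ_apply]

/-- The reduction map on cycles. -/
def ρZ (n : ℕ) (q : ℤ) :
    ↥(cycles p C d q) →ₗ[ℤ_[p]] ↥(cycles p (Cn p C n) (dn p C d n) q) :=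
  (ρC p C n q).restrict (fun x hx => by
    have h0 : dn p C d n q (ρC p C n q x) = 0 := by
      rw [dn_ρC, LinearMap.mem_ker.mp hx, map_zero]
    exact LinearMap.mem_ker.mpr h0)

/-- The natural map `H_q(C) → H_q(C/ℓⁿC)` on homology. -/
def ρH (n : ℕ) (q : ℤ) :
    Hgy p C d q →ₗ[ℤ_[p]] Hgy p (Cn p C n) (dn p C d n) q :=
  Submodule.mapQ _ _ (ρZ p C d n q) (by
    intro z hz
    simp only [Submodule.mem_comap, Submodule.coe_subtype, Submodule.mem_map,
      LinearMap.mem_range, LinearEquiv.coe_coe] at hz ⊢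
    obtain ⟨w, ⟨y, hy⟩, hw⟩ := hz
    refine ⟨ρC p C n (q + 1 - 1) w, ⟨ρC p C n (q + 1) y, ?_⟩, ?_⟩
    · rw [dn_ρC, hy]
    · rw [casteq_natural p (fun a => ρC p C n a), hw]
      rfl)

lemma trC_ρC (n : ℕ) (q : ℤ) (x : C q) :
    trC p C n q (ρC p C (n + 1) q x) = ρC p C n q x := by
  simp [trC, ρC, Submodule.mapQ_apply]

lemma trZ_ρZ (n : ℕ) (q : ℤ) (x : ↥(cycles p C d q)) :
    trZ p C d n q (ρZ p C d (n + 1) q x) = ρZ p C d n q x := by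
  ext
  simp [trZ, ρZ, LinearMap.restrict_apply, trC_ρC]

lemma trH_ρH (n : ℕ) (q : ℤ) (x : Hgy p C d q) :
    trH p C d n q (ρH p C d (n + 1) q x) = ρH p C d n q x := by
  obtain ⟨z, rfl⟩ := Submodule.Quotient.mk_surjective _ x
  simp [trH, ρH, Submodule.mapQ_apply, trZ_ρZ]

/-- The inverse limit `lim_n H_q(C/ℓⁿC)` of the homology of the quotient
complexes along the transition maps. -/
def homologyLimit (q : ℤ) : Set (∀ n : ℕ, Hgy p (Cn p C n) (dn p C d n) q) :=
  {f | ∀ n : ℕ, trH p C d n q (f (n + 1)) = f n}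

/-- The natural map `H_q(C) → lim_n H_q(C/ℓⁿC)`. -/
def natMap (q : ℤ) (x : Hgy p C d q) : homologyLimit p C d q :=
  ⟨fun n => ρH p C d n q x, fun n => trH_ρH p C d n q x⟩

/-!
Write `Z_q` and `B_q` for the cycles and boundaries of `C`. A class in `H_q(C/ℓⁿC)` is a chain
`c` with `d c ∈ ℓⁿC` modulo `B_q + ℓⁿC`. Bounded torsion replaces Artin–Rees in two places.
* `C_q/Z_q` embeds in `C_{q-1}`, so its torsion is killed by some `ℓᴺ`. A cycle in
  `B_q + ℓⁿ⁺ᴺC` therefore lies in `B_q + ℓⁿZ_q`, so the kernel of `H_q(C) → H_q(C/ℓⁿ⁺ᴺC)` is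
  contained in `ℓⁿH_q(C)`.
* `C_{q-1}/B_{q-1}` is an extension of a submodule of `C_{q-2}` by `H_{q-1}(C)`, so its torsion is
  killed by some `ℓᴷ`. If `d c = ℓⁿ⁺ᴷe`, then `ℓᴷe = d w` and `c - ℓⁿw` is a cycle. Hence a class
  of `H_q(C/ℓⁿC)` that lifts to `H_q(C/ℓⁿ⁺ᴷC)` comes from `H_q(C)`.

The kernels of `H_q(C) → H_q(C/ℓⁿC)` thus define the `ℓ`-adic topology on `H_q(C)`, which is
complete because `H_q(C)` is finitely generated.
-/

section BoundedTorsion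

variable {R : Type*} [CommRing R] (r : R) (M : Type*) [AddCommGroup M] [Module R M]

/-- The `r`-power torsion of `M` is bounded: it is all killed by a single power of `r`. -/
def HasBoundedTorsion : Prop :=
  ∃ N : ℕ, ∀ (n : ℕ) (x : M), r ^ n • x = 0 → r ^ N • x = 0

namespace HasBoundedTorsion

variable {r M}

lemma of_eventually_eq
    (h : ∃ N : ℕ, ∀ n, N ≤ n → {x : M | r ^ n • x = 0} = {x : M | r ^ N • x = 0}) :
    HasBoundedTorsion r M := by
  obtain ⟨N, hN⟩ := h
  refine ⟨N, fun n x hx => ?_⟩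
  have hx' : r ^ (N + n) • x = 0 := by rw [pow_add, mul_smul, hx, smul_zero]
  exact (hN (N + n) (Nat.le_add_right N n)).subset hx'

variable (r M) in
lemma of_isNoetherian [IsNoetherian R M] : HasBoundedTorsion r M := by
  obtain ⟨N, hN⟩ := (algebraMap R (Module.End R M) r).eventually_iSup_ker_pow_eq.exists
  have mem_ker (n : ℕ) (x : M) :
      x ∈ LinearMap.ker (algebraMap R (Module.End R M) r ^ n) ↔ r ^ n • x = 0 := by
    rw [← map_pow, LinearMap.mem_ker, Module.algebraMap_end_apply]
  refine ⟨N, fun n x hx => (mem_ker N x).mp ?_⟩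
  rw [← hN]
  exact Submodule.mem_iSup_of_mem n ((mem_ker n x).mpr hx)

lemma quotient_iff {S : Submodule R M} :
    HasBoundedTorsion r (M ⧸ S) ↔ ∃ N : ℕ, ∀ (n : ℕ) (x : M), r ^ n • x ∈ S → r ^ N • x ∈ S := by
  simp only [HasBoundedTorsion, S.mkQ_surjective.forall, Submodule.mkQ_apply,
    ← Submodule.Quotient.mk_smul, Submodule.Quotient.mk_eq_zero]

lemma quotient_ker {M' : Type*} [AddCommGroup M'] [Module R M'] (f : M →ₗ[R] M')
    (h : HasBoundedTorsion r M') : HasBoundedTorsion r (M ⧸ LinearMap.ker f) := by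
  obtain ⟨N, hN⟩ := h
  refine quotient_iff.mpr ⟨N, fun n x hx => ?_⟩
  rw [LinearMap.mem_ker, map_smul] at hx ⊢
  exact hN n (f x) hx

lemma quotient_of_le {S T : Submodule R M} (hST : S ≤ T)
    (hTS : HasBoundedTorsion r (T ⧸ S.comap T.subtype)) (hT : HasBoundedTorsion r (M ⧸ T)) :
    HasBoundedTorsion r (M ⧸ S) := by
  obtain ⟨K, hK⟩ := quotient_iff.mp hTS
  obtain ⟨N, hN⟩ := quotient_iff.mp hT
  refine quotient_iff.mpr ⟨K + N, fun n x hx => ?_⟩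
  have hx' : r ^ n • r ^ N • x ∈ S := by
    rw [smul_comm]
    exact S.smul_mem _ hx
  rw [pow_add, mul_smul]
  exact hK n ⟨r ^ N • x, hN n x (hST hx)⟩ hx'

end HasBoundedTorsion

end BoundedTorsion

section AdicCompleteness

variable {R : Type*} [CommRing R] (I : Ideal R) {M : Type*} [AddCommGroup M] [Module R M]

lemma mem_span_singleton_pow_smul_top_iff {r : R} {n : ℕ} {x : M} :
    x ∈ (Ideal.span {r} ^ n • ⊤ : Submodule R M) ↔ ∃ y : M, r ^ n • y = x := by
  simp [Ideal.span_singleton_pow, Submodule.ideal_span_singleton_smul,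
    Submodule.mem_smul_pointwise_iff_exists]

open AdicCompletion in
lemma isPrecomplete_of_finite [IsPrecomplete I R] [Module.Finite R M] : IsPrecomplete I M := by
  refine of_surjective_iff.mp fun x => ?_
  obtain ⟨t, rfl⟩ := ofTensorProduct_surjective_of_finite I M x
  induction t with
  | zero => exact ⟨0, by simp⟩
  | tmul a m =>
    obtain ⟨a, rfl⟩ := of_surjective I R a
    exact ⟨a • m, by rw [map_smul, ofTensorProduct_tmul]; rfl⟩
  | add s t hs ht =>
    obtain ⟨x, hx⟩ := hs
    obtain ⟨y, hy⟩ := ht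
    exact ⟨x + y, by rw [map_add, map_add, hx, hy]⟩

variable {X : ℕ → Type*} [∀ n, AddCommGroup (X n)] [∀ n, Module R (X n)]
  {φ : ∀ n, M →ₗ[R] X n} {N : ℕ}

lemma injective_of_ker_le_pow_smul_top [IsHausdorff I M]
    (hker : ∀ n, LinearMap.ker (φ (n + N)) ≤ I ^ n • ⊤) :
    Function.Injective fun x n => φ n x := by
  intro x y hxy
  refine IsHausdorff.eq_iff_smodEq (I := I) |>.mpr fun n => ?_
  exact SModEq.sub_mem.mpr (hker n (LinearMap.sub_mem_ker_iff.mpr (congrFun hxy (n + N))))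

lemma exists_forall_eq_of_compatible [IsPrecomplete I M]
    (hker : ∀ n, LinearMap.ker (φ (n + N)) ≤ I ^ n • ⊤)
    (hle : ∀ n, I ^ n • ⊤ ≤ LinearMap.ker (φ n))
    {f : ∀ n, X n} (hf : ∀ {m n}, m ≤ n → ∀ x, φ n x = f n → φ m x = f m)
    (hφ : ∀ n, ∃ x, φ n x = f n) : ∃ x, ∀ n, φ n x = f n := by
  choose z hz using hφ
  obtain ⟨x, hx⟩ := IsPrecomplete.prec (I := I) ‹_› (f := fun n => z (n + N)) fun {m n} hmn => by
    refine SModEq.sub_mem.mpr (hker m (LinearMap.sub_mem_ker_iff.mpr ?_))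
    rw [hz, hf (Nat.add_le_add_right hmn N) _ (hz _)]
  refine ⟨x, fun n => ?_⟩
  rw [← LinearMap.sub_mem_ker_iff.mp (hle n (SModEq.sub_mem.mp (hx n)))]
  exact hf (Nat.le_add_right n N) _ (hz _)

end AdicCompleteness

lemma isAdicComplete_of_finite (H : Type*) [AddCommGroup H] [Module ℤ_[p] H]
    [Module.Finite ℤ_[p] H] : IsAdicComplete (Ideal.span {(p : ℤ_[p])}) H := by
  rw [← PadicInt.maximalIdeal_eq_span_p]
  exact { toIsPrecomplete := isPrecomplete_of_finite _ }

section Boundaries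

lemma bdry_sub_one (q : ℤ) : bdry p C d (q - 1) = LinearMap.range (d q) := by
  have transport (r : ℤ) (h : r = q) (h' : r - 1 = q - 1) :
      (LinearMap.range (d r)).map (casteq p C h').toLinearMap = LinearMap.range (d q) := by
    subst h
    exact Submodule.map_id _
  exact transport _ (by ring) _

lemma bdry_le_cycles (hdd : ∀ (q : ℤ) (x : C q), d (q - 1) (d q x) = 0) (q : ℤ) :
    bdry p C d q ≤ cycles p C d q := by
  obtain ⟨r, rfl⟩ : ∃ r, q = r - 1 := ⟨q + 1, by ring⟩
  rw [bdry_sub_one]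
  rintro _ ⟨x, rfl⟩
  exact hdd r x

lemma bdry_dn (n : ℕ) (q : ℤ) :
    bdry p (Cn p C n) (dn p C d n) q = (bdry p C d q).map (ρC p C n q) := by
  obtain ⟨r, rfl⟩ : ∃ r, q = r - 1 := ⟨q + 1, by ring⟩
  have hcomm : dn p C d n r ∘ₗ ρC p C n r = ρC p C n (r - 1) ∘ₗ d r :=
    LinearMap.ext (dn_ρC p C d n r)
  have hsurj : LinearMap.range (ρC p C n r) = ⊤ := Submodule.range_mkQ _
  rw [bdry_sub_one, bdry_sub_one, ← LinearMap.range_comp, ← hcomm,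
    LinearMap.range_comp_of_range_eq_top _ hsurj]

end Boundaries

section CyclesModulo

/-- The chains in degree `q` whose boundary is divisible by `ℓⁿ`, that is, the lifts to `C` of
the cycles of `C/ℓⁿC`. -/
def cyclesMod (n : ℕ) (q : ℤ) : Submodule ℤ_[p] (C q) :=
  (lpow p C n (q - 1)).comap (d q)

variable {C d} {n m : ℕ} {q : ℤ}

lemma ρC_eq_zero_iff {x : C q} : ρC p C n q x = 0 ↔ x ∈ lpow p C n q :=
  Submodule.Quotient.mk_eq_zero _

lemma dn_ρC_eq_zero_iff {x : C q} : dn p C d n q (ρC p C n q x) = 0 ↔ x ∈ cyclesMod p C d n q := by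
  rw [dn_ρC, ρC_eq_zero_iff, cyclesMod, Submodule.mem_comap]

lemma lpow_antitone : Antitone fun n => lpow p C n q := by
  rintro m n hmn _ ⟨y, rfl⟩
  refine ⟨(p : ℤ_[p]) ^ (n - m) • y, ?_⟩
  simp [smul_smul, ← pow_add, Nat.sub_add_cancel hmn]

lemma cyclesMod_antitone : Antitone fun n => cyclesMod p C d n q :=
  fun _ _ hmn => Submodule.comap_mono (lpow_antitone p hmn)

lemma cycles_le_cyclesMod (n : ℕ) : cycles p C d q ≤ cyclesMod p C d n q :=
  LinearMap.ker_le_comap _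

variable (d n q) in
/-- The class in `H_q(C/ℓⁿC)` of a chain whose boundary is divisible by `ℓⁿ`. -/
def classMod : cyclesMod p C d n q →ₗ[ℤ_[p]] Hgy p (Cn p C n) (dn p C d n) q :=
  Submodule.mkQ _ ∘ₗ (ρC p C n q).restrict fun _ hx => (dn_ρC_eq_zero_iff p).mpr hx

lemma classMod_surjective : Function.Surjective (classMod p d n q) := by
  intro f
  obtain ⟨⟨z, hz⟩, rfl⟩ := Submodule.mkQ_surjective _ f
  obtain ⟨c, rfl⟩ := Submodule.mkQ_surjective _ z
  exact ⟨⟨c, (dn_ρC_eq_zero_iff p).mp hz⟩, rfl⟩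

lemma classMod_eq_zero_iff (c : cyclesMod p C d n q) :
    classMod p d n q c = 0 ↔ ∃ a : C q, c - (p : ℤ_[p]) ^ n • a ∈ bdry p C d q := by
  calc classMod p d n q c = 0 ↔ ρC p C n q c ∈ bdry p (Cn p C n) (dn p C d n) q :=
        Submodule.Quotient.mk_eq_zero _
    _ ↔ (c : C q) ∈ lpow p C n q ⊔ bdry p C d q := by
        rw [bdry_dn, ← Submodule.mem_comap, ρC, Submodule.comap_map_mkQ]
    _ ↔ ∃ a : C q, c - (p : ℤ_[p]) ^ n • a ∈ bdry p C d q := by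
        simp [Submodule.mem_sup, ← eq_sub_iff_add_eq']

lemma trH_classMod (c : cyclesMod p C d (n + 1) q) :
    trH p C d n q (classMod p d (n + 1) q c) =
      classMod p d n q (Submodule.inclusion (cyclesMod_antitone p n.le_succ) c) :=
  rfl

lemma ρH_mk (x : cycles p C d q) :
    ρH p C d n q (Submodule.Quotient.mk x) =
      classMod p d n q (Submodule.inclusion (cycles_le_cyclesMod p n) x) :=
  rfl

lemma classMod_eq_of_le {f : ∀ n, Hgy p (Cn p C n) (dn p C d n) q}
    (hf : f ∈ homologyLimit p C d q) (hmn : m ≤ n) (c : cyclesMod p C d n q)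
    (hc : classMod p d n q c = f n) :
    classMod p d m q (Submodule.inclusion (cyclesMod_antitone p hmn) c) = f m := by
  induction n, hmn using Nat.le_induction with
  | base => exact hc
  | succ n _ ih =>
    refine ih (Submodule.inclusion (cyclesMod_antitone p n.le_succ) c) ?_
    rw [← trH_classMod, hc, hf n]

lemma ρH_eq_of_le {f : ∀ n, Hgy p (Cn p C n) (dn p C d n) q}
    (hf : f ∈ homologyLimit p C d q) (hmn : m ≤ n) (x : Hgy p C d q)
    (hx : ρH p C d n q x = f n) : ρH p C d m q x = f m := by
  obtain ⟨x, rfl⟩ := Submodule.Quotient.mk_surjective _ x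
  rw [ρH_mk] at hx
  exact classMod_eq_of_le p hf hmn _ hx

end CyclesModulo

section Reduction

variable {C d} {q : ℤ}

lemma pow_smul_top_le_ker_ρH (n : ℕ) :
    Ideal.span {(p : ℤ_[p])} ^ n • ⊤ ≤ LinearMap.ker (ρH p C d n q) := by
  intro x hx
  obtain ⟨y, rfl⟩ := mem_span_singleton_pow_smul_top_iff.mp hx
  obtain ⟨y, rfl⟩ := Submodule.Quotient.mk_surjective _ y
  rw [LinearMap.mem_ker, ← Submodule.Quotient.mk_smul, ρH_mk, classMod_eq_zero_iff]
  exact ⟨y, by simp⟩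

lemma exists_ker_ρH_le_pow_smul_top (hB : bdry p C d q ≤ cycles p C d q)
    (h : HasBoundedTorsion (p : ℤ_[p]) (C q ⧸ cycles p C d q)) :
    ∃ N, ∀ n, LinearMap.ker (ρH p C d (n + N) q) ≤ Ideal.span {(p : ℤ_[p])} ^ n • ⊤ := by
  obtain ⟨N, hN⟩ := HasBoundedTorsion.quotient_iff.mp h
  refine ⟨N, fun n x hx => mem_span_singleton_pow_smul_top_iff.mpr ?_⟩
  obtain ⟨x, rfl⟩ := Submodule.Quotient.mk_surjective _ x
  rw [LinearMap.mem_ker, ρH_mk, classMod_eq_zero_iff] at hx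
  obtain ⟨a, ha⟩ := hx
  have ha_cycle : (p : ℤ_[p]) ^ (n + N) • a ∈ cycles p C d q :=
    (Submodule.sub_mem_iff_right _ x.2).mp (hB ha)
  refine ⟨Submodule.Quotient.mk ⟨(p : ℤ_[p]) ^ N • a, hN _ a ha_cycle⟩, Eq.symm ?_⟩
  rw [← Submodule.Quotient.mk_smul, Submodule.Quotient.eq]
  simpa [pow_add, mul_smul] using ha

lemma exists_cyclesMod_le_cycles_sup_lpow
    (h : HasBoundedTorsion (p : ℤ_[p]) (C (q - 1) ⧸ bdry p C d (q - 1))) :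
    ∃ K, ∀ n, cyclesMod p C d (n + K) q ≤ cycles p C d q ⊔ lpow p C n q := by
  rw [bdry_sub_one] at h
  obtain ⟨K, hK⟩ := HasBoundedTorsion.quotient_iff.mp h
  refine ⟨K, fun n c ⟨e, he⟩ => ?_⟩
  replace he : (p : ℤ_[p]) ^ (n + K) • e = d q c := he
  obtain ⟨w, hw⟩ := hK (n + K) e ⟨c, he.symm⟩
  refine Submodule.mem_sup.mpr ⟨c - (p : ℤ_[p]) ^ n • w, ?_, _, ⟨w, rfl⟩, by simp⟩
  rw [LinearMap.mem_ker, map_sub, map_smul, hw, smul_smul, ← pow_add, he, sub_self]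

lemma exists_ρH_eq_of_mem_homologyLimit
    (h : HasBoundedTorsion (p : ℤ_[p]) (C (q - 1) ⧸ bdry p C d (q - 1)))
    {f : ∀ n, Hgy p (Cn p C n) (dn p C d n) q} (hf : f ∈ homologyLimit p C d q) (n : ℕ) :
    ∃ x, ρH p C d n q x = f n := by
  obtain ⟨K, hK⟩ := exists_cyclesMod_le_cycles_sup_lpow p h
  obtain ⟨c, hc⟩ := classMod_surjective p (f (n + K))
  obtain ⟨z, hz, _, ⟨a, rfl⟩, hza⟩ := Submodule.mem_sup.mp (hK n c.2)
  refine ⟨Submodule.Quotient.mk ⟨z, hz⟩, ?_⟩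
  rw [ρH_mk, ← classMod_eq_of_le p hf (Nat.le_add_right n K) c hc, ← sub_eq_zero, ← map_sub,
    classMod_eq_zero_iff]
  exact ⟨-a, by simp [← hza]⟩

end Reduction

theorem homology_natMap_bijective_general
    (hdd : ∀ (q : ℤ) (x : C q), d (q - 1) (d q x) = 0) (q : ℤ)
    (hq : IsAdicComplete (Ideal.span {(p : ℤ_[p])}) (Hgy p C d q))
    (hH : HasBoundedTorsion (p : ℤ_[p]) (Hgy p C d (q - 1)))
    (hC₁ : HasBoundedTorsion (p : ℤ_[p]) (C (q - 1)))
    (hC₂ : HasBoundedTorsion (p : ℤ_[p]) (C (q - 1 - 1))) :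
    Function.Bijective (natMap p C d q) := by
  have hB := bdry_le_cycles p C d hdd
  obtain ⟨N, hker⟩ := exists_ker_ρH_le_pow_smul_top p (hB q) (hC₁.quotient_ker (d q))
  have hCB : HasBoundedTorsion (p : ℤ_[p]) (C (q - 1) ⧸ bdry p C d (q - 1)) :=
    .quotient_of_le (hB (q - 1)) hH (hC₂.quotient_ker (d (q - 1)))
  constructor
  · intro x y hxy
    exact injective_of_ker_le_pow_smul_top _ hker (congrArg Subtype.val hxy)
  · rintro ⟨f, hf⟩
    obtain ⟨x, hx⟩ := exists_forall_eq_of_compatible _ hker (pow_smul_top_le_ker_ρH p)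
      (ρH_eq_of_le p hf) (exists_ρH_eq_of_mem_homologyLimit p hCB hf)
    exact ⟨x, Subtype.ext (funext hx)⟩

/-- **Isomorphism (4.3) in the proof of Proposition 4.1.**  Let `C` be a chain complex
of `ℤ_ℓ`-modules concentrated in finitely many degrees such that (i) each homology
module `H_q(C)` is finitely generated over `ℤ_ℓ` and (ii) the `ℓ`-torsion of each term
of `C` is bounded.  Then for every `q` the natural map
`H_q(C) → lim_n H_q(C/ℓⁿC)` is an isomorphism. -/
theorem homology_natMap_bijective
    (hdd : ∀ (q : ℤ) (x : C q), d (q - 1) (d q x) = 0)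
    (hfin : ∃ s : Finset ℤ, ∀ q ∉ s, ∀ x : C q, x = 0)
    (hfg : ∀ q : ℤ, Module.Finite ℤ_[p] (Hgy p C d q))
    (htors : ∀ q : ℤ, ∃ N : ℕ, ∀ n, N ≤ n →
      {x : C q | (p : ℤ_[p]) ^ n • x = 0} = {x : C q | (p : ℤ_[p]) ^ N • x = 0}) :
    ∀ q : ℤ, Function.Bijective (natMap p C d q) := by
  exact fun q => homology_natMap_bijective_general p C d hdd q (isAdicComplete_of_finite p _)
    (.of_isNoetherian _ _) (.of_eventually_eq (htors _)) (.of_eventually_eq (htors _))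

end LadicHomologyLimit
end
end

section
/- For t ∈ F, there exists x ∈ SL(2, F) such that all entries of x⁻¹ γ_t x lie in 𝔬 if and only if v(t) ≥ 0, i.e. if and only if t ∈ 𝔬. (Remark following Proposition 9.2: the affine Springer fiber 𝔛_γ for SL(2) is nonempty if and only if γ ∈ 𝔱(𝔬).) -/
noncomputable section
open scoped Classical

/-- The ring of integers `𝔬 = k[[ε]]`, viewed as a subring of `F = k((ε))`. -/
def intRing (k : Type) [Field k] : Subring (LaurentSeries k) :=
  (HahnSeries.ofPowerSeries ℤ k).range

/-- The `ε`-adic valuation on `F = k((ε))`, normalized by `v ε = 1`,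
with the convention `v 0 = ⊤`. -/
def v {k : Type} [Field k] (x : LaurentSeries k) : WithTop ℤ :=
  if x = 0 then ⊤ else (x.order : WithTop ℤ)

/-! Conjugation preserves the characteristic polynomial. If all entries of `x⁻¹ * γ * x` are
integral, then so are the coefficients of its characteristic polynomial, and hence so are the
eigenvalues of `γ`. Since `k[[ε]]` is integrally closed in `k((ε))`, integral eigenvalues lie in
`𝔬`; conversely, for a diagonal `γ` over `𝔬` one takes `x = 1`. -/

section Integrality

open Polynomial

variable {R A n : Type*} [CommRing R] [CommRing A] [Algebra R A] [Fintype n] [DecidableEq n]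

theorem isIntegral_coeff_charpoly {M : Matrix n n A} (hM : ∀ i j, IsIntegral R (M i j)) (m : ℕ) :
    IsIntegral R (M.charpoly.coeff m) := by
  let := Polynomial.algebra R A
  have charmatrix_integral (i j : n) : IsIntegral R[X] (M.charmatrix i j) := by
    refine Polynomial.isIntegral_iff_isIntegral_coeff.mpr fun l => ?_
    rw [Matrix.charmatrix_apply, Matrix.diagonal_apply, coeff_sub, apply_ite (coeff · l),
      coeff_zero, coeff_X, coeff_C]
    refine .sub ?_ ?_ <;> split_ifs
    exacts [isIntegral_one, isIntegral_zero, isIntegral_zero, hM i j, isIntegral_zero]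
  exact Polynomial.isIntegral_iff_isIntegral_coeff.mp (IsIntegral.det charmatrix_integral) m

theorem isIntegral_of_isRoot_charpoly {M : Matrix n n A}
    (hM : ∀ i j, IsIntegral R (M i j)) {a : A} (ha : M.charpoly.IsRoot a) : IsIntegral R a := by
  nontriviality A
  refine .of_aeval_monic_of_isIntegral_coeff M.charpoly_monic ?_ ?_ (isIntegral_coeff_charpoly hM)
  · intro natDegree_eq_zero
    rw [M.charpoly_monic.natDegree_eq_zero.mp natDegree_eq_zero] at ha
    simp at ha
  · rw [ha.eq_zero]
    exact isIntegral_zero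

theorem charpoly_inv_mul_mul {x : Matrix n n A} (hx : IsUnit x.det) (M : Matrix n n A) :
    (x⁻¹ * M * x).charpoly = M.charpoly := by
  rw [Matrix.charpoly_mul_comm, Matrix.mul_nonsing_inv_cancel_left x M hx]

theorem isRoot_charpoly_diagonal (d : n → A) (i : n) :
    (Matrix.diagonal d).charpoly.IsRoot (d i) := by
  rw [Matrix.charpoly_diagonal, IsRoot.def, eval_prod]
  exact Finset.prod_eq_zero (Finset.mem_univ i) (by simp)

theorem springer_fiber_nonempty_iff_general (d : n → A) :
    (∃ x : Matrix n n A, x.det = 1 ∧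
        ∀ i j, IsIntegral R ((x⁻¹ * Matrix.diagonal d * x) i j)) ↔
      ∀ i, IsIntegral R (d i) := by
  constructor
  · rintro ⟨x, hx, h_int⟩ i
    refine isIntegral_of_isRoot_charpoly h_int ?_
    rw [charpoly_inv_mul_mul (hx ▸ isUnit_one)]
    exact isRoot_charpoly_diagonal d i
  · refine fun hd => ⟨1, Matrix.det_one, fun i j => ?_⟩
    rw [inv_one, one_mul, mul_one, Matrix.diagonal_apply]
    split_ifs
    exacts [hd i, isIntegral_zero]

end Integrality

section LaurentSeries

variable {k : Type} [Field k]

theorem mem_intRing_iff_isIntegral {t : LaurentSeries k} :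
    t ∈ intRing k ↔ IsIntegral (PowerSeries k) t :=
  IsIntegrallyClosed.isIntegral_iff.symm

theorem v_eq_orderTop (t : LaurentSeries k) : v t = t.orderTop := by
  unfold v
  split_ifs with ht
  · rw [ht, HahnSeries.orderTop_zero]
  · exact HahnSeries.order_eq_orderTop_of_ne_zero ht

theorem zero_le_v_iff_mem_intRing {t : LaurentSeries k} : 0 ≤ v t ↔ t ∈ intRing k := by
  rw [v_eq_orderTop]
  constructor
  · intro ht
    have order_nonneg : 0 ≤ t.order := HahnSeries.zero_le_orderTop_iff.mp ht
    exact ⟨_, LaurentSeries.X_order_mul_powerSeriesPart (Int.toNat_of_nonneg order_nonneg)⟩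
  · rintro ⟨f, rfl⟩
    refine HahnSeries.le_orderTop_iff_forall.mpr fun i hi => ?_
    rw [PowerSeries.coeff_coe, if_pos (by exact_mod_cast hi)]

end LaurentSeries

/-- **Remark following Proposition 9.2.**  For `t ∈ F` and `γ_t = !![t, 0; 0, -t]`,
there exists `x ∈ SL(2, F)` with all entries of `x⁻¹ * γ_t * x` in `𝔬` if and only if
`v t ≥ 0`, i.e. if and only if `t ∈ 𝔬`: the affine Springer fiber `𝔛_γ` is nonempty
iff `γ ∈ 𝔱(𝔬)`. -/
theorem springer_fiber_nonempty_iff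
    {k : Type} [Field k] (t : LaurentSeries k) :
    ((∃ x : Matrix (Fin 2) (Fin 2) (LaurentSeries k), x.det = 1 ∧
        ∀ i j, (x⁻¹ * !![t, 0; 0, -t] * x) i j ∈ intRing k) ↔ 0 ≤ v t) ∧
    (0 ≤ v t ↔ t ∈ intRing k) := by
  refine ⟨?_, zero_le_v_iff_mem_intRing⟩
  simpa [zero_le_v_iff_mem_intRing, mem_intRing_iff_isIntegral, Matrix.diagonal_fin_two]
    using springer_fiber_nonempty_iff_general (R := PowerSeries k) ![t, -t]
end
end

section
/- Assume char k ≠ 2 and let t ∈ F be nonzero. For n ∈ ℕ and u ∈ F, set x_u = !![1, u; 0, 1] · !![εⁿ, 0; 0, ε⁻ⁿ] ∈ SL(2, F). Then all entries of x_u⁻¹ γ_t x_u lie in 𝔬 if and only if v(t) ≥ 0 and v(u) ≥ 2n − v(t). (Computation of the truncated Bruhat cells in the proof of Proposition 9.2.) -/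
noncomputable section
open scoped Classical

/-- The uniformizer `ε ∈ k((ε))`. -/
def ε (k : Type) [Field k] : LaurentSeries k := HahnSeries.single 1 1

/-!
Conjugating `diag(a, b)` by `!![1, u; 0, 1]` creates the single new entry `(a - b) * u`, and
conjugating further by `diag(e, e⁻¹)` multiplies that entry by `e⁻²`. Hence integrality of the
conjugate is integrality of `a`, `b` and `e⁻² * ((a - b) * u)`, read off by the valuation. For
`γ_t` one has `a - b = 2 * t`, whose valuation is that of `t` because `2` is a nonzero constant.
-/

section Conjugation

variable {R : Type*} [CommRing R]

theorem unipotent_conj_diag (a b u : R) :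
    !![1, u; 0, 1]⁻¹ * !![a, 0; 0, b] * !![1, u; 0, 1] = !![a, (a - b) * u; 0, b] := by
  have hinv : !![1, u; 0, 1]⁻¹ = !![1, -u; 0, 1] :=
    Matrix.inv_eq_left_inv (by simp [Matrix.one_fin_two])
  rw [hinv]
  simp [sub_eq_add_neg, add_mul, mul_comm u]

theorem torus_conj_upperTriangular (a b c : R) (e f : Rˣ) :
    !![(e : R), 0; 0, ↑f]⁻¹ * !![a, c; 0, b] * !![(e : R), 0; 0, ↑f] =
      !![a, ↑e⁻¹ * (↑f * c); 0, b] := by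
  have hinv : !![(e : R), 0; 0, ↑f]⁻¹ = !![↑e⁻¹, 0; 0, ↑f⁻¹] :=
    Matrix.inv_eq_left_inv (by simp [Matrix.one_fin_two])
  rw [hinv, Matrix.mul_assoc]
  simp [mul_comm _ (f : R), mul_comm _ (e : R)]

theorem borel_conj_diag (a b u : R) (e f : Rˣ) :
    (!![1, u; 0, 1] * !![(e : R), 0; 0, ↑f])⁻¹ * !![a, 0; 0, b] *
        (!![1, u; 0, 1] * !![(e : R), 0; 0, ↑f]) =
      !![a, ↑e⁻¹ * (↑f * ((a - b) * u)); 0, b] := by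
  rw [← torus_conj_upperTriangular, ← unipotent_conj_diag, Matrix.mul_inv_rev]
  simp only [Matrix.mul_assoc]

end Conjugation

section AddValuation

variable {Γ₀ : Type*} [LinearOrderedAddCommMonoidWithTop Γ₀]

theorem le_addValuation_units_inv_mul_iff {R : Type*} [Ring R] (w : AddValuation R Γ₀)
    (e : Rˣ) (x : R) (g : Γ₀) : g ≤ w (↑e⁻¹ * x) ↔ w e + g ≤ w x := by
  constructor <;> intro h
  · calc
      w e + g ≤ w e + w (↑e⁻¹ * x) := by gcongr
      _ = w x := by rw [← w.map_mul, Units.mul_inv_cancel_left]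
  · calc
      g = w ↑e⁻¹ + (w e + g) := by
        rw [← add_assoc, ← w.map_mul, Units.inv_mul, w.map_one, zero_add]
      _ ≤ w ↑e⁻¹ + w x := by gcongr
      _ = w (↑e⁻¹ * x) := (w.map_mul _ _).symm

theorem truncated_cell_membership_general {R : Type*} [CommRing R] (w : AddValuation R Γ₀)
    (a b u : R) (e : Rˣ) :
    (∀ i j, 0 ≤ w (((!![1, u; 0, 1] * !![(e : R), 0; 0, ↑e⁻¹])⁻¹ * !![a, 0; 0, b] *
        (!![1, u; 0, 1] * !![(e : R), 0; 0, ↑e⁻¹])) i j)) ↔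
      0 ≤ w a ∧ 0 ≤ w b ∧ 2 • w e ≤ w u + w (a - b) := by
  have upperRight :
      0 ≤ w (↑e⁻¹ * (↑e⁻¹ * ((a - b) * u))) ↔ 2 • w e ≤ w u + w (a - b) := by
    rw [le_addValuation_units_inv_mul_iff, le_addValuation_units_inv_mul_iff, add_zero,
      ← two_nsmul, w.map_mul, add_comm (w u)]
  rw [borel_conj_diag, ← upperRight]
  simp only [Fin.forall_fin_two, Matrix.of_apply, Matrix.cons_val, w.map_zero, le_top, true_and]
  rw [and_right_comm, and_assoc]

end AddValuation

theorem mem_range_ofPowerSeries_iff {R : Type*} [Semiring R] {x : LaurentSeries R} :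
    x ∈ Set.range (HahnSeries.ofPowerSeries ℤ R) ↔ 0 ≤ x.orderTop := by
  constructor
  · rintro ⟨p, rfl⟩
    refine HahnSeries.le_orderTop_iff_forall.mpr fun j hj ↦ ?_
    rw [PowerSeries.coeff_coe, if_pos (WithTop.coe_lt_coe.mp hj)]
  · intro hx
    obtain ⟨n, hn⟩ := Int.eq_ofNat_of_zero_le (HahnSeries.zero_le_orderTop_iff.mp hx)
    exact ⟨_, LaurentSeries.X_order_mul_powerSeriesPart hn.symm⟩

section Laurent

variable {k : Type} [Field k]

theorem v_eq_addVal (x : LaurentSeries k) : v x = HahnSeries.addVal ℤ k x := by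
  rw [v]
  split_ifs with hx
  · simp [hx]
  · exact (HahnSeries.addVal_apply_of_ne hx).symm

theorem mem_intRing_iff {x : LaurentSeries k} : x ∈ intRing k ↔ 0 ≤ v x := by
  rw [v_eq_addVal, HahnSeries.addVal_apply]
  exact mem_range_ofPowerSeries_iff

theorem v_ε_pow (n : ℕ) : v (ε k ^ n) = ((n : ℤ) : WithTop ℤ) := by
  rw [v_eq_addVal, HahnSeries.addVal_apply, ε, HahnSeries.single_pow, one_pow, nsmul_one,
    HahnSeries.orderTop_single one_ne_zero]

theorem v_C {c : k} (hc : c ≠ 0) : v (HahnSeries.C c : LaurentSeries k) = 0 := by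
  rw [v_eq_addVal, HahnSeries.addVal_apply, HahnSeries.C_apply, HahnSeries.orderTop_single hc,
    WithTop.coe_zero]

theorem ε_ne_zero : ε k ≠ 0 :=
  HahnSeries.single_ne_zero one_ne_zero

theorem v_add_self (h2 : (2 : k) ≠ 0) (x : LaurentSeries k) : v (x + x) = v x := by
  calc
    v (x + x) = v (HahnSeries.C 2 * x) := by rw [← two_mul, map_ofNat]
    _ = v (HahnSeries.C 2 : LaurentSeries k) + v x := by
      simp only [v_eq_addVal, AddValuation.map_mul]
    _ = v x := by rw [v_C h2, zero_add]

end Laurent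

/-- **Computation of the truncated Bruhat cells (proof of Proposition 9.2).**
Assume `char k ≠ 2`, let `t ∈ F` be nonzero, and for `n ∈ ℕ`, `u ∈ F`, set
`x_u = !![1, u; 0, 1] * !![εⁿ, 0; 0, ε⁻ⁿ]`.  With `γ_t = !![t, 0; 0, -t]`,
all entries of `x_u⁻¹ * γ_t * x_u` lie in `𝔬` iff `v t ≥ 0` and
`v u ≥ 2n - v t` (the latter written additively as `2n ≤ v u + v t`). -/
theorem truncated_cell_membership
    {k : Type} [Field k] (h2 : (2 : k) ≠ 0)
    (t : LaurentSeries k) (ht : t ≠ 0) (n : ℕ) (u : LaurentSeries k) :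
    (∀ i j,
      ((!![1, u; 0, 1] * !![(ε k) ^ n, 0; 0, ((ε k) ^ n)⁻¹])⁻¹ *
        !![t, 0; 0, -t] *
        (!![1, u; 0, 1] * !![(ε k) ^ n, 0; 0, ((ε k) ^ n)⁻¹])) i j ∈ intRing k) ↔
    (0 ≤ v t ∧ ((2 * (n : ℤ) : ℤ) : WithTop ℤ) ≤ v u + v t) := by
  simpa [-AddValuation.map_pow, ← v_eq_addVal, mem_intRing_iff, v_add_self h2, v_ε_pow,
    two_nsmul, two_mul] using
    truncated_cell_membership_general (HahnSeries.addVal ℤ k) t (-t) u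
      (Units.mk0 (ε k) ε_ne_zero ^ n)
end
end
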